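/- For every two projection games G and H, val₊(G ⊗ H) = val₊(G) · val₊(H). -/

import Mathlib

open Finset

/-- A projection game: finite nonempty question sets `Q1` (Alice) and `Q2` (Bob),
a finite nonempty alphabet `A`, and a probability mass function `μ` on triples
`(u, v, π)` where `π : A → Option A` encodes a projection constraint
(the answer pair `(α, β)` satisfies `π` iff `π β = some α`). -/
structure ProjGame where
  Q1 : Type
  Q2 : Type
  A : Type
  [fQ1 : Fintype Q1]
  [fQ2 : Fintype Q2]
  [fA : Fintype A]
  [neQ1 : Nonempty Q1]
  [neQ2 : Nonempty Q2]
  [neA : Nonempty A]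
  [dQ1 : DecidableEq Q1]
  [dQ2 : DecidableEq Q2]
  [dA : DecidableEq A]
  μ : Q1 × Q2 × (A → Option A) → ℝ
  μ_nonneg : ∀ x, 0 ≤ μ x
  μ_sum : ∑ x, μ x = 1

attribute [instance] ProjGame.fQ1 ProjGame.fQ2 ProjGame.fA
  ProjGame.neQ1 ProjGame.neQ2 ProjGame.neA ProjGame.dQ1 ProjGame.dQ2 ProjGame.dA

namespace ProjGame

variable (G : ProjGame)

/-- The `U`-marginal (Alice-side marginal) of `μ`. -/
noncomputable def wU (u : G.Q1) : ℝ := ∑ v, ∑ π, G.μ (u, v, π)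

/-- The `V`-marginal (Bob-side marginal) of `μ`. -/
noncomputable def wV (v : G.Q2) : ℝ := ∑ u, ∑ π, G.μ (u, v, π)

/-- The game operator: `(Gf)(u,α) = E_{(v,π)|u} [∑_{β : π β = some α} f (v,β)]`. -/
noncomputable def op (f : G.Q2 × G.A → ℝ) : G.Q1 × G.A → ℝ :=
  fun p =>
    (∑ v, ∑ π, G.μ (p.1, v, π) * ∑ β, if π β = some p.2 then f (v, β) else 0) / G.wU p.1

/-- Squared norm on functions on `U × Σ`: `‖g‖² = E_u [∑_α g(u,α)²]`. -/
noncomputable def normUsq (g : G.Q1 × G.A → ℝ) : ℝ := ∑ u, G.wU u * ∑ α, (g (u, α)) ^ 2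

/-- Squared norm on functions on `V × Σ`: `‖f‖² = E_v [∑_β f(v,β)²]`. -/
noncomputable def normVsq (f : G.Q2 × G.A → ℝ) : ℝ := ∑ v, G.wV v * ∑ β, (f (v, β)) ^ 2

/-- Inner product `⟨g, g'⟩ = E_u [∑_α g(u,α) g'(u,α)]`. -/
noncomputable def inn (g g' : G.Q1 × G.A → ℝ) : ℝ :=
  ∑ u, G.wU u * ∑ α, g (u, α) * g' (u, α)

/-- An assignment for Bob. -/
def IsBob (f : G.Q2 × G.A → ℝ) : Prop := (∀ p, 0 ≤ f p) ∧ ∀ v, ∑ β, f (v, β) = 1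

/-- An assignment for Alice. -/
def IsAlice (g : G.Q1 × G.A → ℝ) : Prop := (∀ p, 0 ≤ g p) ∧ ∀ u, ∑ α, g (u, α) = 1

/-- The value of the game: `val(G) = max ⟨g, Gf⟩` over assignments. -/
noncomputable def val : ℝ :=
  sSup { x | ∃ f g, G.IsBob f ∧ G.IsAlice g ∧ x = G.inn g (G.op f) }

/-- The collision value `‖G‖ = max_f ‖Gf‖` over assignments `f` for Bob. -/
noncomputable def collVal : ℝ :=
  sSup { x | ∃ f, G.IsBob f ∧ x = Real.sqrt (G.normUsq (G.op f)) }

/-- Product of projection constraints. -/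
def tensorC {A A' : Type} (π : A → Option A) (π' : A' → Option A') :
    A × A' → Option (A × A') :=
  fun b => (π b.1).bind fun a => (π' b.2).map fun a' => (a, a')

/-- The product (parallel repetition) of two projection games. -/
noncomputable def tensor (G H : ProjGame) : ProjGame where
  Q1 := G.Q1 × H.Q1
  Q2 := G.Q2 × H.Q2
  A := G.A × H.A
  μ := fun x =>
    ∑ y : (G.Q1 × G.Q2 × (G.A → Option G.A)) × (H.Q1 × H.Q2 × (H.A → Option H.A)),
      if ((y.1.1, y.2.1), (y.1.2.1, y.2.2.1), tensorC y.1.2.2 y.2.2.2) = x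
      then G.μ y.1 * H.μ y.2 else 0
  μ_nonneg := by
    intro x
    refine Finset.sum_nonneg fun y _ => ?_
    split
    · exact mul_nonneg (G.μ_nonneg _) (H.μ_nonneg _)
    · exact le_refl 0
  μ_sum := by
    rw [Finset.sum_comm]
    simp only [Finset.sum_ite_eq, Finset.mem_univ, if_true]
    rw [Fintype.sum_prod_type]
    calc (∑ y1, ∑ y2, G.μ y1 * H.μ y2)
        = (∑ y1, G.μ y1) * (∑ y2, H.μ y2) := by rw [Finset.sum_mul_sum]
      _ = 1 := by rw [G.μ_sum, H.μ_sum, mul_one]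

/-- `G.iterTensor k` is the `(k+1)`-fold parallel repetition `G^{⊗(k+1)}`. -/
noncomputable def iterTensor (G : ProjGame) : ℕ → ProjGame
  | 0 => G
  | n + 1 => G.tensor (G.iterTensor n)

/-- `val₊(G)`: supremum of values of vector assignments. -/
noncomputable def valPlus (G : ProjGame) : ℝ :=
  sSup { x | ∃ n : ℕ, 0 < n ∧ ∃ f : G.Q2 × G.A → Fin n → ℝ,
    (∀ p i, 0 ≤ f p i) ∧
    (∀ v, Real.sqrt (∑ i, (∑ β, f (v, β) i) ^ 2) ≤ 1) ∧
    x = Real.sqrt (∑ u, G.wU u * ∑ α, ∑ i, (G.op (fun q => f q i) (u, α)) ^ 2) }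

/-- `‖Th‖² = E_v [(∑_β h(v,β))²]`. -/
noncomputable def Tnormsq (G : ProjGame) (h : G.Q2 × G.A → ℝ) : ℝ :=
  ∑ v, G.wV v * (∑ β, h (v, β)) ^ 2

/-- `λ₊(G)`: supremum of `‖Gh‖/‖Th‖` over nonnegative `h` with `‖Th‖ > 0`. -/
noncomputable def lambdaPlus (G : ProjGame) : ℝ :=
  sSup { x | ∃ h : G.Q2 × G.A → ℝ, (∀ p, 0 ≤ h p) ∧
    0 < Real.sqrt (G.Tnormsq h) ∧
    x = Real.sqrt (G.normUsq (G.op h)) / Real.sqrt (G.Tnormsq h) }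

/-- The symmetrized distribution on `V × V` (with the constraints marginalized out). -/
noncomputable def msym (G : ProjGame) (v v' : G.Q2) : ℝ :=
  ∑ u, ((∑ π, G.μ (u, v, π)) * (∑ π', G.μ (u, v', π'))) / G.wU u

/-- `G` is `γ`-expanding: the Markov operator of the symmetrized constraint graph has
spectral gap at least `γ`, i.e. `|⟨x, Ax⟩| ≤ (1-γ) E_v[x(v)²]` for mean-zero `x`. -/
def IsExpanding (G : ProjGame) (γ : ℝ) : Prop :=
  ∀ x : G.Q2 → ℝ, (∑ v, G.wV v * x v) = 0 →
    |∑ v, ∑ v', G.msym v v' * x v * x v'| ≤ (1 - γ) * ∑ v, G.wV v * (x v) ^ 2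

/-- The symmetrized distribution on `(v, v', π, π')`. -/
noncomputable def msymFull (G : ProjGame) (v v' : G.Q2) (π π' : G.A → Option G.A) : ℝ :=
  ∑ u, (G.μ (u, v, π) * G.μ (u, v', π')) / G.wU u

/-- The value of the assignment `x` in the symmetrized game `G_sym`. -/
noncomputable def symValAssign (G : ProjGame) (x : G.Q2 → G.A) : ℝ :=
  ∑ v, ∑ v', ∑ π, ∑ π', G.msymFull v v' π π' *
    (if ∃ α, π (x v) = some α ∧ π' (x v') = some α then 1 else 0)

/-- The value of the symmetrized game `G_sym`. -/
noncomputable def symVal (G : ProjGame) : ℝ :=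
  sSup { r | ∃ x : G.Q2 → G.A, r = G.symValAssign x }

end ProjGame

/-!
A vector assignment for `G ⊗ H` can be played in two stages. Applying only the operator of `H` turns
an assignment `f` for `G ⊗ H` into a vector-valued function on `V × Σ`, whose extra coordinates are
the questions and answers of Alice in `H`, weighted by the square root of the question probability.
The operator of `G` then recovers the value of `f`. For each `v`, summing the intermediate function
over the answers in `Σ` gives the image under `H` of a vector assignment for `H`, so its norm is at
most `val₊(H)`; by homogeneity the value of `f` is at most `val₊(G) · val₊(H)`. Here it matters that
`val₊` allows vectors of any dimension. Conversely, values are multiplicative under tensor products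
of vector assignments.
-/

namespace ProjGame

variable {G H : ProjGame}

theorem wU_nonneg (G : ProjGame) (u : G.Q1) : 0 ≤ G.wU u :=
  sum_nonneg fun _ _ ↦ sum_nonneg fun _ _ ↦ G.μ_nonneg _

theorem sum_wU (G : ProjGame) : ∑ u, G.wU u = 1 := by
  rw [← G.μ_sum]
  simp only [wU, Fintype.sum_prod_type]

open Classical in
/-- The probability of the event `E` under the distribution `μ` of `(u, v, π)`. -/
noncomputable def prob (G : ProjGame) (E : G.Q1 × G.Q2 × (G.A → Option G.A) → Prop) : ℝ :=
  ∑ x with E x, G.μ x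

theorem wU_eq_prob (G : ProjGame) (u : G.Q1) : G.wU u = G.prob fun x ↦ x.1 = u := by
  rw [prob, sum_filter, Fintype.sum_prod_type, Fintype.sum_eq_single u (by simp +contextual)]
  simp [wU, Fintype.sum_prod_type]

theorem sum_μ_tensor_mul
    (F : (G.tensor H).Q1 × (G.tensor H).Q2 × ((G.tensor H).A → Option (G.tensor H).A) → ℝ) :
    ∑ z, (G.tensor H).μ z * F z =
      ∑ x, ∑ y, G.μ x * H.μ y * F ((x.1, y.1), (x.2.1, y.2.1), tensorC x.2.2 y.2.2) := by
  simp only [tensor, sum_mul, ite_mul, zero_mul]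
  rw [sum_comm, Fintype.sum_prod_type]
  refine sum_congr rfl fun x _ ↦ sum_congr rfl fun y _ ↦ ?_
  exact (Fintype.sum_eq_single ((x.1, y.1), (x.2.1, y.2.1), tensorC x.2.2 y.2.2)
    fun z hz ↦ if_neg hz.symm).trans (if_pos rfl)

open Classical in
theorem prob_tensor {E : G.Q1 × G.Q2 × (G.A → Option G.A) → Prop}
    {F : H.Q1 × H.Q2 × (H.A → Option H.A) → Prop}
    {EF : (G.tensor H).Q1 × (G.tensor H).Q2 × ((G.tensor H).A → Option (G.tensor H).A) → Prop}
    (h : ∀ x y, EF ((x.1, y.1), (x.2.1, y.2.1), tensorC x.2.2 y.2.2) ↔ E x ∧ F y) :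
    (G.tensor H).prob EF = G.prob E * H.prob F := by
  calc (G.tensor H).prob EF
      = ∑ z, (G.tensor H).μ z * if EF z then 1 else 0 := by simp only [prob, sum_filter, mul_boole]
    _ = ∑ x, ∑ y, if E x ∧ F y then G.μ x * H.μ y else 0 := by
      rw [sum_μ_tensor_mul]
      simp only [h, mul_boole]
    _ = G.prob E * H.prob F := by
      simp only [prob, sum_filter, sum_mul_sum, ite_zero_mul_ite_zero]

theorem wU_tensor (u : G.Q1) (u' : H.Q1) : (G.tensor H).wU (u, u') = G.wU u * H.wU u' := by
  calc (G.tensor H).wU (u, u')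
      = (G.tensor H).prob fun x ↦ x.1 = (u, u') := wU_eq_prob _ _
    _ = (G.prob fun x ↦ x.1 = u) * H.prob fun x ↦ x.1 = u' := prob_tensor fun _ _ ↦ Prod.mk_inj
    _ = G.wU u * H.wU u' := by rw [← wU_eq_prob, ← wU_eq_prob]

theorem tensorC_eq_some_iff {A A' : Type} {π : A → Option A} {π' : A' → Option A'} {b : A × A'}
    {a : A × A'} : tensorC π π' b = some a ↔ π b.1 = some a.1 ∧ π' b.2 = some a.2 := by
  unfold tensorC
  cases π b.1 <;> cases π' b.2 <;> simp [Prod.ext_iff]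

/-- The matrix of the game operator: the entry at `(u, α)`, `(v, β)` is the probability, given
Alice's question `u`, that Bob's question is `v` and the constraint maps `β` to `α`. -/
noncomputable def opMatrix (G : ProjGame) : Matrix (G.Q1 × G.A) (G.Q2 × G.A) ℝ :=
  fun p q ↦ (G.prob fun x ↦ x.1 = p.1 ∧ x.2.1 = q.1 ∧ x.2.2 q.2 = some p.2) / G.wU p.1

theorem opMatrix_apply (u : G.Q1) (α : G.A) (v : G.Q2) (β : G.A) :
    G.opMatrix (u, α) (v, β) = (∑ π with π β = some α, G.μ (u, v, π)) / G.wU u := by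
  simp [opMatrix, prob, sum_filter, Fintype.sum_prod_type, ite_and]

theorem op_eq_mulVec (f : G.Q2 × G.A → ℝ) : G.op f = G.opMatrix.mulVec f := by
  ext ⟨u, α⟩
  simp only [op, Matrix.mulVec, dotProduct, Fintype.sum_prod_type, opMatrix_apply, sum_filter,
    div_mul_eq_mul_div, sum_div, sum_mul, mul_sum]
  refine sum_congr rfl fun v _ ↦ ?_
  rw [sum_comm]
  simp only [mul_ite, ite_mul, mul_zero, zero_mul]

theorem opMatrix_nonneg (p : G.Q1 × G.A) (q : G.Q2 × G.A) : 0 ≤ G.opMatrix p q :=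
  div_nonneg (sum_nonneg fun _ _ ↦ G.μ_nonneg _) (G.wU_nonneg _)

theorem opMatrix_tensor (u : G.Q1) (u' : H.Q1) (α : G.A) (α' : H.A) (q : G.Q2 × G.A)
    (q' : H.Q2 × H.A) :
    (G.tensor H).opMatrix ((u, u'), (α, α')) ((q.1, q'.1), (q.2, q'.2)) =
      G.opMatrix (u, α) q * H.opMatrix (u', α') q' := by
  simp only [opMatrix, wU_tensor, div_mul_div_comm]
  congr 1
  refine prob_tensor fun x y ↦ ?_
  exact (Prod.mk_inj.and (Prod.mk_inj.and tensorC_eq_some_iff)).trans (by tauto)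

theorem op_nonneg {f : G.Q2 × G.A → ℝ} (hf : ∀ q, 0 ≤ f q) (p : G.Q1 × G.A) : 0 ≤ G.op f p := by
  rw [op_eq_mulVec]
  exact sum_nonneg fun q _ ↦ mul_nonneg (opMatrix_nonneg p q) (hf q)

theorem op_smul (c : ℝ) (f : G.Q2 × G.A → ℝ) : G.op (c • f) = c • G.op f := by
  simp only [op_eq_mulVec, Matrix.mulVec_smul]

theorem op_sum {ι : Type*} (s : Finset ι) (f : ι → G.Q2 × G.A → ℝ) :
    G.op (∑ i ∈ s, f i) = ∑ i ∈ s, G.op (f i) := by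
  simp only [op_eq_mulVec, Matrix.mulVec_sum]

theorem op_tensor (f : (G.tensor H).Q2 × (G.tensor H).A → ℝ) (u : G.Q1) (u' : H.Q1) (α : G.A)
    (α' : H.A) :
    (G.tensor H).op f ((u, u'), (α, α')) =
      G.op (fun q ↦ H.op (fun q' ↦ f ((q.1, q'.1), (q.2, q'.2))) (u', α')) (u, α) := by
  calc (G.tensor H).op f ((u, u'), (α, α'))
      = ∑ r : (G.Q2 × H.Q2) × (G.A × H.A),
          (G.tensor H).opMatrix ((u, u'), (α, α')) r * f r := by rw [op_eq_mulVec]; rfl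
    _ = ∑ z : (G.Q2 × G.A) × (H.Q2 × H.A),
          (G.tensor H).opMatrix ((u, u'), (α, α')) ((z.1.1, z.2.1), (z.1.2, z.2.2)) *
            f ((z.1.1, z.2.1), (z.1.2, z.2.2)) :=
      ((Equiv.prodProdProdComm ..).sum_comp _).symm
    _ = _ := by
      rw [Fintype.sum_prod_type]
      simp only [opMatrix_tensor, op_eq_mulVec, Matrix.mulVec, dotProduct, mul_sum, ← mul_assoc]

/-- The squared value `E_u [∑_α |(Gf)(u, α)|²]` of a vector-valued function `f`, given in
coordinates. The coordinates are indexed by any finite type, so that they may be questions and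
answers of another game. -/
noncomputable def sqValue (G : ProjGame) {ι : Type*} [Fintype ι] (f : G.Q2 × G.A → ι → ℝ) : ℝ :=
  ∑ u, G.wU u * ∑ α, ∑ i, (G.op (fun q ↦ f q i) (u, α)) ^ 2

/-- The squared Euclidean norm of `∑_β f (v, β)`. -/
def answerNormSq (G : ProjGame) {ι : Type*} [Fintype ι] (f : G.Q2 × G.A → ι → ℝ) (v : G.Q2) : ℝ :=
  ∑ i, (∑ β, f (v, β) i) ^ 2

/-- Vector assignments, with coordinates indexed by any finite type. -/
structure IsVectorAssignment (G : ProjGame) {ι : Type*} [Fintype ι] (f : G.Q2 × G.A → ι → ℝ) :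
    Prop where
  nonneg : ∀ q i, 0 ≤ f q i
  answerNormSq_le_one : ∀ v, G.answerNormSq f v ≤ 1

section Homogeneity

variable {ι κ : Type*} [Fintype ι] [Fintype κ]

theorem sqValue_nonneg (f : G.Q2 × G.A → ι → ℝ) : 0 ≤ G.sqValue f :=
  sum_nonneg fun u _ ↦ mul_nonneg (G.wU_nonneg u) <|
    sum_nonneg fun _ _ ↦ sum_nonneg fun _ _ ↦ sq_nonneg _

theorem sqValue_smul (c : ℝ) (f : G.Q2 × G.A → ι → ℝ) :
    G.sqValue (c • f) = c ^ 2 * G.sqValue f := by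
  have hop (i : ι) : G.op (fun q ↦ (c • f) q i) = c • G.op fun q ↦ f q i := op_smul c _
  simp only [sqValue, hop]
  simp only [Pi.smul_apply, smul_eq_mul, mul_pow, mul_sum, mul_left_comm]

theorem answerNormSq_smul (c : ℝ) (f : G.Q2 × G.A → ι → ℝ) (v : G.Q2) :
    G.answerNormSq (c • f) v = c ^ 2 * G.answerNormSq f v := by
  simp only [answerNormSq, Pi.smul_apply, smul_eq_mul, ← mul_sum, mul_pow]

theorem sqValue_comp_equiv (f : G.Q2 × G.A → ι → ℝ) (e : κ ≃ ι) :
    G.sqValue (fun q ↦ f q ∘ e) = G.sqValue f := by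
  refine sum_congr rfl fun u _ ↦ congrArg (G.wU u * ·) <| sum_congr rfl fun α _ ↦ ?_
  exact e.sum_comp fun i ↦ (G.op (fun q ↦ f q i) (u, α)) ^ 2

theorem answerNormSq_comp_equiv (f : G.Q2 × G.A → ι → ℝ) (e : κ ≃ ι) (v : G.Q2) :
    G.answerNormSq (fun q ↦ f q ∘ e) v = G.answerNormSq f v :=
  e.sum_comp fun i ↦ (∑ β, f (v, β) i) ^ 2

theorem eq_zero_of_answerNormSq_nonpos {f : G.Q2 × G.A → ι → ℝ} (hf : ∀ q i, 0 ≤ f q i)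
    (h : ∀ v, G.answerNormSq f v ≤ 0) : f = 0 := by
  ext ⟨v, β⟩ i
  have hsq : (∑ β, f (v, β) i) ^ 2 ≤ 0 :=
    (single_le_sum (fun i _ ↦ sq_nonneg (∑ β, f (v, β) i)) (mem_univ i)).trans (h v)
  have hsum : ∑ β, f (v, β) i = 0 := pow_eq_zero_iff two_ne_zero |>.1 (hsq.antisymm (sq_nonneg _))
  exact (sum_eq_zero_iff_of_nonneg fun β _ ↦ hf (v, β) i).1 hsum β (mem_univ β)

end Homogeneity

section Bounded

/-- The probability that Bob's question is `v` given that Alice's question is `u`, equal to `0` if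
`u` has probability zero. -/
noncomputable def condProb (G : ProjGame) (u : G.Q1) (v : G.Q2) : ℝ :=
  (∑ π, G.μ (u, v, π)) / G.wU u

theorem condProb_nonneg (u : G.Q1) (v : G.Q2) : 0 ≤ G.condProb u v :=
  div_nonneg (sum_nonneg fun _ _ ↦ G.μ_nonneg _) (G.wU_nonneg u)

theorem sum_condProb_le_one (u : G.Q1) : ∑ v, G.condProb u v ≤ 1 := by
  simp only [condProb, ← sum_div]
  exact div_self_le_one (G.wU u)

theorem sum_opMatrix_le_condProb (u : G.Q1) (v : G.Q2) (β : G.A) :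
    ∑ α, G.opMatrix (u, α) (v, β) ≤ G.condProb u v := by
  simp only [opMatrix_apply, ← sum_div, condProb]
  refine div_le_div_of_nonneg_right ?_ (G.wU_nonneg u)
  rw [← sum_fiberwise univ (fun π ↦ π β) fun π ↦ G.μ (u, v, π), Fintype.sum_option]
  exact le_add_of_nonneg_left (sum_nonneg fun _ _ ↦ G.μ_nonneg _)

theorem sum_op_le {f : G.Q2 × G.A → ℝ} (hf : ∀ q, 0 ≤ f q) (u : G.Q1) :
    ∑ α, G.op f (u, α) ≤ ∑ v, G.condProb u v * ∑ β, f (v, β) := by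
  calc ∑ α, G.op f (u, α)
      = ∑ v, ∑ β, (∑ α, G.opMatrix (u, α) (v, β)) * f (v, β) := by
        simp only [op_eq_mulVec, Matrix.mulVec, dotProduct]
        rw [sum_comm]
        simp only [Fintype.sum_prod_type, sum_mul]
    _ ≤ ∑ v, ∑ β, G.condProb u v * f (v, β) := by
        gcongr with v _ β _
        · exact hf _
        · exact sum_opMatrix_le_condProb u v β
    _ = ∑ v, G.condProb u v * ∑ β, f (v, β) := by simp only [mul_sum]

theorem sum_sq_op_le {f : G.Q2 × G.A → ℝ} (hf : ∀ q, 0 ≤ f q) (u : G.Q1) :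
    ∑ α, G.op f (u, α) ^ 2 ≤ ∑ v, G.condProb u v * (∑ β, f (v, β)) ^ 2 := by
  have hop (α : G.A) : 0 ≤ G.op f (u, α) := op_nonneg hf _
  have hc (v : G.Q2) : 0 ≤ G.condProb u v := condProb_nonneg u v
  have hsq : 0 ≤ ∑ v, G.condProb u v * (∑ β, f (v, β)) ^ 2 :=
    sum_nonneg fun v _ ↦ mul_nonneg (hc v) (sq_nonneg _)
  calc ∑ α, G.op f (u, α) ^ 2
      ≤ (∑ α, G.op f (u, α)) ^ 2 := sum_sq_le_sq_sum_of_nonneg fun α _ ↦ hop α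
    _ ≤ (∑ v, G.condProb u v * ∑ β, f (v, β)) ^ 2 :=
        pow_le_pow_left₀ (sum_nonneg fun α _ ↦ hop α) (sum_op_le hf u) 2
    _ ≤ (∑ v, G.condProb u v) * ∑ v, G.condProb u v * (∑ β, f (v, β)) ^ 2 :=
        sum_sq_le_sum_mul_sum_of_sq_le_mul _ (fun v _ ↦ hc v)
          (fun v _ ↦ mul_nonneg (hc v) (sq_nonneg _)) fun v _ ↦ by rw [mul_pow, sq, mul_assoc]
    _ ≤ ∑ v, G.condProb u v * (∑ β, f (v, β)) ^ 2 :=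
        mul_le_of_le_one_left hsq (sum_condProb_le_one u)

theorem IsVectorAssignment.sqValue_le_one {ι : Type*} [Fintype ι] {f : G.Q2 × G.A → ι → ℝ}
    (hf : G.IsVectorAssignment f) : G.sqValue f ≤ 1 := by
  have hu (u : G.Q1) : ∑ α, ∑ i, (G.op (fun q ↦ f q i) (u, α)) ^ 2 ≤ 1 := by
    calc ∑ α, ∑ i, (G.op (fun q ↦ f q i) (u, α)) ^ 2
        = ∑ i, ∑ α, (G.op (fun q ↦ f q i) (u, α)) ^ 2 := sum_comm
      _ ≤ ∑ i, ∑ v, G.condProb u v * (∑ β, f (v, β) i) ^ 2 :=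
          sum_le_sum fun i _ ↦ sum_sq_op_le (fun q ↦ hf.nonneg q i) u
      _ = ∑ v, G.condProb u v * G.answerNormSq f v := by
          rw [sum_comm]
          simp only [answerNormSq, mul_sum]
      _ ≤ ∑ v, G.condProb u v :=
          sum_le_sum fun v _ ↦
            mul_le_of_le_one_right (condProb_nonneg u v) (hf.answerNormSq_le_one v)
      _ ≤ 1 := sum_condProb_le_one u
  calc G.sqValue f
      ≤ ∑ u, G.wU u := sum_le_sum fun u _ ↦ mul_le_of_le_one_right (G.wU_nonneg u) (hu u)
    _ = 1 := G.sum_wU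

end Bounded

section Supremum

/-- The set of values of vector assignments whose supremum is `valPlus`. -/
def vectorValues (G : ProjGame) : Set ℝ :=
  {x | ∃ n : ℕ, 0 < n ∧ ∃ f : G.Q2 × G.A → Fin n → ℝ, G.IsVectorAssignment f ∧ x = √(G.sqValue f)}

theorem isVectorAssignment_zero {ι : Type*} [Fintype ι] :
    G.IsVectorAssignment (0 : G.Q2 × G.A → ι → ℝ) :=
  ⟨fun _ _ ↦ le_rfl, fun _ ↦ by simp [answerNormSq]⟩

theorem isLUB_valPlus (G : ProjGame) : IsLUB G.vectorValues G.valPlus := by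
  have hval : G.valPlus = sSup G.vectorValues := by
    have hiff (n : ℕ) (f : G.Q2 × G.A → Fin n → ℝ) : G.IsVectorAssignment f ↔
        (∀ q i, 0 ≤ f q i) ∧ ∀ v, √(∑ i, (∑ β, f (v, β) i) ^ 2) ≤ 1 :=
      ⟨fun h ↦ ⟨h.nonneg, fun v ↦ Real.sqrt_le_one.2 (h.answerNormSq_le_one v)⟩,
        fun h ↦ ⟨h.1, fun v ↦ Real.sqrt_le_one.1 (h.2 v)⟩⟩
    simp only [valPlus, vectorValues, hiff, sqValue, and_assoc]
  have hbdd : BddAbove G.vectorValues := by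
    refine ⟨1, ?_⟩
    rintro _ ⟨n, -, f, hf, rfl⟩
    exact Real.sqrt_le_one.2 hf.sqValue_le_one
  rw [hval]
  exact isLUB_csSup ⟨_, 1, one_pos, 0, isVectorAssignment_zero, rfl⟩ hbdd

theorem valPlus_nonneg (G : ProjGame) : 0 ≤ G.valPlus :=
  (Real.sqrt_nonneg _).trans
    (G.isLUB_valPlus.1 ⟨1, one_pos, 0, isVectorAssignment_zero, rfl⟩)

variable {ι : Type*} [Fintype ι] {f : G.Q2 × G.A → ι → ℝ}

theorem IsVectorAssignment.sqrt_sqValue_le_valPlus (hf : G.IsVectorAssignment f) :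
    √(G.sqValue f) ≤ G.valPlus := by
  obtain hι | hι := isEmpty_or_nonempty ι
  · simpa [sqValue] using G.valPlus_nonneg
  · let e : Fin (Fintype.card ι) ≃ ι := (Fintype.equivFin ι).symm
    have he : G.IsVectorAssignment fun q ↦ f q ∘ e :=
      ⟨fun q i ↦ hf.nonneg q (e i), fun v ↦
        (answerNormSq_comp_equiv f e v).trans_le (hf.answerNormSq_le_one v)⟩
    exact G.isLUB_valPlus.1
      ⟨_, Fintype.card_pos, _, he, congrArg Real.sqrt (sqValue_comp_equiv f e).symm⟩

theorem sqrt_sqValue_le_mul_valPlus (hf : ∀ q i, 0 ≤ f q i) {c : ℝ} (hc : 0 ≤ c)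
    (h : ∀ v, G.answerNormSq f v ≤ c ^ 2) : √(G.sqValue f) ≤ c * G.valPlus := by
  obtain rfl | hc := hc.eq_or_lt
  · obtain rfl := eq_zero_of_answerNormSq_nonpos hf (by simpa using h)
    simp [sqValue, op]
  · have hcf : G.IsVectorAssignment (c⁻¹ • f) := by
      refine ⟨fun q i ↦ mul_nonneg (inv_nonneg.2 hc.le) (hf q i), fun v ↦ ?_⟩
      rw [answerNormSq_smul, inv_pow, inv_mul_le_one₀ (by positivity)]
      exact h v
    have hle := hcf.sqrt_sqValue_le_valPlus
    rwa [sqValue_smul, Real.sqrt_mul (sq_nonneg _), Real.sqrt_sq (inv_nonneg.2 hc.le),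
      inv_mul_le_iff₀ hc] at hle

end Supremum

section Tensor

variable {ι κ : Type*} [Fintype ι] [Fintype κ]

theorem sqValue_tensor (f : (G.tensor H).Q2 × (G.tensor H).A → ι → ℝ) :
    (G.tensor H).sqValue f = ∑ u, ∑ u', G.wU u * H.wU u' * ∑ α, ∑ α', ∑ i,
      (G.op (fun q ↦ H.op (fun q' ↦ f ((q.1, q'.1), (q.2, q'.2)) i) (u', α')) (u, α)) ^ 2 := by
  calc (G.tensor H).sqValue f
      = ∑ u : G.Q1 × H.Q1, (G.tensor H).wU u * ∑ α : G.A × H.A, ∑ i,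
          ((G.tensor H).op (fun q ↦ f q i) (u, α)) ^ 2 := rfl
    _ = _ := by
      simp only [Fintype.sum_prod_type, wU_tensor]
      refine sum_congr rfl fun u _ ↦ sum_congr rfl fun u' _ ↦ congrArg (G.wU u * H.wU u' * ·) <|
        sum_congr rfl fun α _ ↦ sum_congr rfl fun α' _ ↦ sum_congr rfl fun i _ ↦ ?_
      exact congrArg (· ^ 2) (op_tensor _ u u' α α')

/-- The second game's operator applied to a vector assignment for `G ⊗ H`. Alice's questions and
answers in `H` become coordinates of a vector-valued function for `G`; the weight `√(wU u')` turns
the expectation over `u'` into a Euclidean norm. -/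
noncomputable def partialOp (f : (G.tensor H).Q2 × (G.tensor H).A → ι → ℝ) :
    G.Q2 × G.A → H.Q1 × H.A × ι → ℝ :=
  fun q j ↦ √(H.wU j.1) * H.op (fun q' ↦ f ((q.1, q'.1), (q.2, q'.2)) j.2.2) (j.1, j.2.1)

/-- The vector assignment for `H` obtained from one for `G ⊗ H` by fixing Bob's question `v` in `G`
and summing over his answers to it. -/
def marginal (f : (G.tensor H).Q2 × (G.tensor H).A → ι → ℝ) (v : G.Q2) : H.Q2 × H.A → ι → ℝ :=
  fun q' i ↦ ∑ β, f ((v, q'.1), (β, q'.2)) i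

theorem sqValue_partialOp (f : (G.tensor H).Q2 × (G.tensor H).A → ι → ℝ) :
    G.sqValue (partialOp f) = (G.tensor H).sqValue f := by
  have hop (u' : H.Q1) (α' : H.A) (i : ι) : G.op (fun q ↦ partialOp f q (u', α', i)) =
      √(H.wU u') • G.op fun q ↦ H.op (fun q' ↦ f ((q.1, q'.1), (q.2, q'.2)) i) (u', α') :=
    op_smul _ _
  rw [sqValue_tensor]
  refine sum_congr rfl fun u _ ↦ ?_
  simp only [Fintype.sum_prod_type, hop, Pi.smul_apply, smul_eq_mul, mul_pow,
    Real.sq_sqrt (H.wU_nonneg _), mul_assoc, ← mul_sum]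
  rw [sum_comm]
  simp only [mul_sum]

theorem answerNormSq_partialOp (f : (G.tensor H).Q2 × (G.tensor H).A → ι → ℝ) (v : G.Q2) :
    G.answerNormSq (partialOp f) v = H.sqValue (marginal f v) := by
  have hop (i : ι) : H.op (fun q' ↦ marginal f v q' i) =
      ∑ β, H.op fun q' ↦ f ((v, q'.1), (β, q'.2)) i := by
    rw [← op_sum]
    congr 1
    ext q'
    rw [Finset.sum_apply]
    rfl
  simp only [sqValue, hop]
  simp only [answerNormSq, partialOp, Finset.sum_apply, ← mul_sum, mul_pow,
    Real.sq_sqrt (H.wU_nonneg _), Fintype.sum_prod_type]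

theorem IsVectorAssignment.marginal {f : (G.tensor H).Q2 × (G.tensor H).A → ι → ℝ}
    (hf : (G.tensor H).IsVectorAssignment f) (v : G.Q2) :
    H.IsVectorAssignment (marginal f v) := by
  refine ⟨fun q' i ↦ sum_nonneg fun β _ ↦ hf.nonneg _ i, fun v' ↦ ?_⟩
  refine le_of_eq_of_le (sum_congr rfl fun i _ ↦ ?_) (hf.answerNormSq_le_one (v, v'))
  congr 1
  exact (Fintype.sum_prod_type_right fun β : G.A × H.A ↦ f ((v, v'), β) i).symm

theorem IsVectorAssignment.sqrt_sqValue_tensor_le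
    {f : (G.tensor H).Q2 × (G.tensor H).A → ι → ℝ} (hf : (G.tensor H).IsVectorAssignment f) :
    √((G.tensor H).sqValue f) ≤ G.valPlus * H.valPlus := by
  rw [← sqValue_partialOp, mul_comm]
  refine sqrt_sqValue_le_mul_valPlus (fun q j ↦ ?_) H.valPlus_nonneg fun v ↦ ?_
  · exact mul_nonneg (Real.sqrt_nonneg _) (op_nonneg (fun q' ↦ hf.nonneg _ _) _)
  · rw [answerNormSq_partialOp]
    exact (Real.sqrt_le_left H.valPlus_nonneg).1 (hf.marginal v).sqrt_sqValue_le_valPlus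

/-- The tensor product of two vector-valued functions, as a function for the product game. -/
def tensorAssignment (f : G.Q2 × G.A → ι → ℝ) (f' : H.Q2 × H.A → κ → ℝ) :
    (G.tensor H).Q2 × (G.tensor H).A → ι × κ → ℝ :=
  fun q j ↦ f (q.1.1, q.2.1) j.1 * f' (q.1.2, q.2.2) j.2

theorem sqValue_tensorAssignment (f : G.Q2 × G.A → ι → ℝ) (f' : H.Q2 × H.A → κ → ℝ) :
    (G.tensor H).sqValue (tensorAssignment f f') = G.sqValue f * H.sqValue f' := by
  have hop (u : G.Q1) (u' : H.Q1) (α : G.A) (α' : H.A) (j : ι × κ) :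
      G.op (fun q ↦ H.op (fun q' ↦ tensorAssignment f f' ((q.1, q'.1), (q.2, q'.2)) j) (u', α'))
        (u, α) = G.op (fun q ↦ f q j.1) (u, α) * H.op (fun q' ↦ f' q' j.2) (u', α') := by
    have hH (q : G.Q2 × G.A) :
        H.op (fun q' ↦ tensorAssignment f f' ((q.1, q'.1), (q.2, q'.2)) j) (u', α') =
          H.op (fun q' ↦ f' q' j.2) (u', α') * f q j.1 :=
      (congrFun (op_smul (f q j.1) fun q' ↦ f' q' j.2) (u', α')).trans (mul_comm _ _)
    simp only [hH]
    exact (congrFun (op_smul _ fun q ↦ f q j.1) (u, α)).trans (mul_comm _ _)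
  rw [sqValue_tensor]
  simp only [hop, sqValue, Fintype.sum_prod_type, mul_pow, sum_mul_sum,
    mul_mul_mul_comm (G.wU _)]

theorem answerNormSq_tensorAssignment (f : G.Q2 × G.A → ι → ℝ) (f' : H.Q2 × H.A → κ → ℝ)
    (v : G.Q2) (v' : H.Q2) :
    (G.tensor H).answerNormSq (tensorAssignment f f') (v, v') =
      G.answerNormSq f v * H.answerNormSq f' v' := by
  calc (G.tensor H).answerNormSq (tensorAssignment f f') (v, v')
      = ∑ j : ι × κ, (∑ β : G.A × H.A, f (v, β.1) j.1 * f' (v', β.2) j.2) ^ 2 := rfl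
    _ = G.answerNormSq f v * H.answerNormSq f' v' := by
      simp only [answerNormSq, Fintype.sum_prod_type, sum_mul_sum, ← mul_pow]

theorem IsVectorAssignment.tensor {f : G.Q2 × G.A → ι → ℝ} {f' : H.Q2 × H.A → κ → ℝ}
    (hf : G.IsVectorAssignment f) (hf' : H.IsVectorAssignment f') :
    (G.tensor H).IsVectorAssignment (tensorAssignment f f') where
  nonneg _ _ := mul_nonneg (hf.nonneg _ _) (hf'.nonneg _ _)
  answerNormSq_le_one := fun (v, v') ↦ by
    rw [answerNormSq_tensorAssignment]
    exact mul_le_one₀ (hf.answerNormSq_le_one v) (sum_nonneg fun _ _ ↦ sq_nonneg _)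
      (hf'.answerNormSq_le_one v')

end Tensor

end ProjGame

/-- **Multiplicativity.** For every two projection games `G`, `H`,
`val₊(G ⊗ H) = val₊(G) · val₊(H)`. -/
theorem valPlus_multiplicative (G H : ProjGame) :
    (G.tensor H).valPlus = G.valPlus * H.valPlus := by
  refine le_antisymm ((G.tensor H).isLUB_valPlus.2 ?_) ?_
  · rintro _ ⟨n, -, f, hf, rfl⟩
    exact hf.sqrt_sqValue_tensor_le
  · refine mul_le_of_forall_lt_of_nonneg G.valPlus_nonneg (G.tensor H).valPlus_nonneg
      fun a _ ha b hb₀ hb ↦ ?_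
    obtain ⟨_, ⟨m, -, f, hf, rfl⟩, haf⟩ := (lt_isLUB_iff G.isLUB_valPlus).1 ha
    obtain ⟨_, ⟨n, -, f', hf', rfl⟩, hbf'⟩ := (lt_isLUB_iff H.isLUB_valPlus).1 hb
    calc a * b
        ≤ √(G.sqValue f) * √(H.sqValue f') :=
          mul_le_mul haf.le hbf'.le hb₀ (Real.sqrt_nonneg _)
      _ = √((G.tensor H).sqValue (ProjGame.tensorAssignment f f')) := by
          rw [ProjGame.sqValue_tensorAssignment, Real.sqrt_mul (ProjGame.sqValue_nonneg f)]
      _ ≤ (G.tensor H).valPlus := (hf.tensor hf').sqrt_sqValue_le_valPlus
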